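/- Let (X,d) be a metric space and μ a Borel measure on X. Let 1 < p ≤ Q < ∞ and suppose μ(B(x,r)) ≤ C·r^Q for all x ∈ X and r > 0 (closed balls), where C > 0 is a fixed constant. Let A ⊆ X be a compact set with H^{Q-p}(A) < ∞, where H^{Q-p} is the (Q−p)-dimensional Hausdorff measure. Then M_p(Γ_A) = 0, where Γ_A is the family of all curves parametrized by arc length whose image intersects A; that is, for every ε > 0 there exists a Borel function ρ : X → [0,∞] with ∫_X ρ^p dμ ≤ ε such that ∫_0^L ρ(c(t)) dt ≥ 1 for every L > 0 and every curve c : [0,L] → X parametrized by arc length with image meeting A. -/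

import Mathlib

open MeasureTheory Set Metric
open scoped ENNReal

/-- A curve `c : [0,L] → X` parametrized by arc length: `c` is 1-Lipschitz on `[0,L]`
and its length (total variation) on each subinterval `[s,t] ⊆ [0,L]` equals `t - s`. -/
def IsArcLengthParam {X : Type*} [PseudoMetricSpace X] (L : ℝ) (c : ℝ → X) : Prop :=
  LipschitzOnWith 1 c (Icc 0 L) ∧
    ∀ s t : ℝ, 0 ≤ s → s ≤ t → t ≤ L →
      eVariationOn c (Icc s t) = ENNReal.ofReal (t - s)

/-!
A countable cover of `A` by balls `B(xᵢ, rᵢ)` of small radii with `∑ rᵢ ^ (Q - p) ≤ H^{Q-p}(A) + 1`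
yields the density `f = supᵢ rᵢ⁻¹ 1_{B(xᵢ, 2 rᵢ)}`. A curve that meets `B(xᵢ, rᵢ)` and has diameter
much larger than the radii spends length at least `rᵢ` in `B(xᵢ, 2 rᵢ)`, so `f` has integral at
least `1` along it; moreover `∫ f ^ p dμ` is bounded independently of the radii, while the measure
of the support of `f` tends to `0` with them.

Given finitely many such densities with sum `g`, absolute continuity of `∫ g ^ p dμ` provides a
further one, `f`, supported where `g` carries almost no energy, so that
`∫ (g + f) ^ p dμ ≤ ∫ g ^ p dμ + K` for a fixed constant `K`. Hence the average of `N` suitable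
densities is admissible with energy at most `N ^ (1 - p) K`, which tends to `0` because `p > 1`.
The nonconstant curves form a countable union of the families of curves of diameter bounded below.
-/

open Filter Function Topology
open scoped NNReal

section Modulus

variable {X : Type*} [MeasurableSpace X] {μ : Measure X} {p : ℝ}

/-- Fuglede's `p`-modulus, relative to `μ`, of a family `E` of measures. The modulus of a family of
curves is recovered by taking for `E` the length measures (`lengthMeasure`) of its members. -/
noncomputable def pModulus (μ : Measure X) (p : ℝ) (E : Set (Measure X)) : ℝ≥0∞ :=
  ⨅ (ρ : X → ℝ≥0∞) (_ : Measurable ρ ∧ ∀ ν ∈ E, 1 ≤ ∫⁻ x, ρ x ∂ν), ∫⁻ x, ρ x ^ p ∂μ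

lemma pModulus_le_lintegral {E : Set (Measure X)} {ρ : X → ℝ≥0∞} (hρ : Measurable ρ)
    (hE : ∀ ν ∈ E, 1 ≤ ∫⁻ x, ρ x ∂ν) : pModulus μ p E ≤ ∫⁻ x, ρ x ^ p ∂μ :=
  iInf₂_le ρ ⟨hρ, hE⟩

lemma exists_lintegral_rpow_lt_of_pModulus_lt {E : Set (Measure X)} {a : ℝ≥0∞}
    (h : pModulus μ p E < a) :
    ∃ ρ : X → ℝ≥0∞, Measurable ρ ∧ (∀ ν ∈ E, 1 ≤ ∫⁻ x, ρ x ∂ν) ∧ ∫⁻ x, ρ x ^ p ∂μ < a := by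
  simpa only [pModulus, iInf_lt_iff, exists_prop, and_assoc] using h

lemma lintegral_iSup_rpow_le_tsum {ι : Type*} [Countable ι] (hp : 0 < p) {f : ι → X → ℝ≥0∞}
    (hf : ∀ i, Measurable (f i)) :
    ∫⁻ x, (⨆ i, f i x) ^ p ∂μ ≤ ∑' i, ∫⁻ x, f i x ^ p ∂μ := by
  rw [← lintegral_tsum fun i ↦ ((hf i).pow_const p).aemeasurable]
  refine lintegral_mono fun x ↦ ?_
  calc (⨆ i, f i x) ^ p = ⨆ i, f i x ^ p := (ENNReal.orderIsoRpow p hp).map_iSup _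
    _ ≤ ∑' i, f i x ^ p := iSup_le fun i ↦ ENNReal.le_tsum i

lemma pModulus_iUnion_le {ι : Type*} [Countable ι] (hp : 0 < p) (E : ι → Set (Measure X)) :
    pModulus μ p (⋃ i, E i) ≤ ∑' i, pModulus μ p (E i) := by
  by_cases htop : ∑' i, pModulus μ p (E i) = ⊤
  · exact htop ▸ le_top
  refine ENNReal.le_of_forall_pos_le_add fun ε hε _ ↦ ?_
  obtain ⟨ε', hε', hsum⟩ :=
    ENNReal.exists_pos_sum_of_countable' (ENNReal.coe_ne_zero.2 hε.ne') ι
  choose ρ hρ hadm hlt using fun i ↦ exists_lintegral_rpow_lt_of_pModulus_lt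
    (ENNReal.lt_add_right (ENNReal.ne_top_of_tsum_ne_top htop i) (hε' i).ne')
  have hadm' : ∀ ν ∈ ⋃ i, E i, 1 ≤ ∫⁻ x, ⨆ i, ρ i x ∂ν := by
    intro ν hν
    obtain ⟨i, hi⟩ := mem_iUnion.1 hν
    exact (hadm i ν hi).trans (lintegral_mono fun x ↦ le_iSup (fun i ↦ ρ i x) i)
  calc pModulus μ p (⋃ i, E i)
      ≤ ∫⁻ x, (⨆ i, ρ i x) ^ p ∂μ := pModulus_le_lintegral (.iSup hρ) hadm'
    _ ≤ ∑' i, ∫⁻ x, ρ i x ^ p ∂μ := lintegral_iSup_rpow_le_tsum hp hρ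
    _ ≤ ∑' i, (pModulus μ p (E i) + ε' i) := ENNReal.tsum_le_tsum fun i ↦ (hlt i).le
    _ ≤ ∑' i, pModulus μ p (E i) + ε := by
      rw [ENNReal.tsum_add]
      gcongr

lemma lintegral_add_rpow_le (hp : 1 ≤ p) (g : X → ℝ≥0∞) {f : X → ℝ≥0∞} (hf : Measurable f) :
    ∫⁻ x, (g x + f x) ^ p ∂μ ≤
      ∫⁻ x, g x ^ p ∂μ +
        2 ^ (p - 1) * (∫⁻ x in support f, g x ^ p ∂μ + ∫⁻ x, f x ^ p ∂μ) := by
  have hS : MeasurableSet (support f) := measurableSet_support hf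
  have on_compl : ∫⁻ x in (support f)ᶜ, (g x + f x) ^ p ∂μ ≤ ∫⁻ x, g x ^ p ∂μ := by
    rw [setLIntegral_congr_fun hS.compl fun x hx ↦ by rw [notMem_support.1 hx, add_zero]]
    exact setLIntegral_le_lintegral _ _
  have on_support : ∫⁻ x in support f, (g x + f x) ^ p ∂μ ≤
      2 ^ (p - 1) * (∫⁻ x in support f, g x ^ p ∂μ + ∫⁻ x, f x ^ p ∂μ) := by
    calc ∫⁻ x in support f, (g x + f x) ^ p ∂μ
        ≤ ∫⁻ x in support f, 2 ^ (p - 1) * (g x ^ p + f x ^ p) ∂μ :=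
          lintegral_mono fun x ↦ by
            simpa only [mul_add] using ENNReal.rpow_add_le_mul_rpow_add_rpow (g x) (f x) hp
      _ = 2 ^ (p - 1) * (∫⁻ x in support f, g x ^ p ∂μ + ∫⁻ x in support f, f x ^ p ∂μ) := by
          rw [lintegral_const_mul' _ _ (by finiteness), lintegral_add_right _ (hf.pow_const p)]
      _ ≤ _ := by
          gcongr
          exact Measure.restrict_le_self
  rw [← lintegral_add_compl _ hS, add_comm]
  exact add_le_add on_compl on_support

lemma exists_natCast_le_lintegral {E : Set (Measure X)} {M : ℝ≥0∞} (hp : 1 ≤ p) (hM : M ≠ ⊤)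
    (h : ∀ δ : ℝ≥0∞, 0 < δ → ∃ f : X → ℝ≥0∞, Measurable f ∧ (∀ ν ∈ E, 1 ≤ ∫⁻ x, f x ∂ν) ∧
      ∫⁻ x, f x ^ p ∂μ ≤ M ∧ μ (support f) < δ) (N : ℕ) :
    ∃ g : X → ℝ≥0∞, Measurable g ∧ (∀ ν ∈ E, N ≤ ∫⁻ x, g x ∂ν) ∧
      ∫⁻ x, g x ^ p ∂μ ≤ N * (2 ^ (p - 1) * (1 + M)) := by
  induction N with
  | zero => exact ⟨0, measurable_zero, by simp, by simp [show 0 < p by linarith]⟩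
  | succ N ih =>
    obtain ⟨g, hg, hgE, hgp⟩ := ih
    have hg_ne_top : ∫⁻ x, g x ^ p ∂μ ≠ ⊤ := ne_top_of_le_ne_top (by finiteness) hgp
    obtain ⟨δ, hδ, hgδ⟩ := exists_pos_setLIntegral_lt_of_measure_lt hg_ne_top one_ne_zero
    obtain ⟨f, hf, hfE, hfp, hfδ⟩ := h δ hδ
    refine ⟨fun x ↦ g x + f x, hg.add hf, fun ν hν ↦ ?_, ?_⟩
    · rw [lintegral_add_left hg, Nat.cast_succ]
      exact add_le_add (hgE ν hν) (hfE ν hν)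
    · calc ∫⁻ x, (g x + f x) ^ p ∂μ
          ≤ ∫⁻ x, g x ^ p ∂μ +
              2 ^ (p - 1) * (∫⁻ x in support f, g x ^ p ∂μ + ∫⁻ x, f x ^ p ∂μ) :=
            lintegral_add_rpow_le hp g hf
        _ ≤ N * (2 ^ (p - 1) * (1 + M)) + 2 ^ (p - 1) * (1 + M) := by
            gcongr
            exact (hgδ _ hfδ).le
        _ = (N + 1 : ℕ) * (2 ^ (p - 1) * (1 + M)) := by rw [Nat.cast_succ, add_one_mul]

theorem pModulus_eq_zero_of_measure_support_lt {E : Set (Measure X)} {M : ℝ≥0∞} (hp : 1 < p)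
    (hM : M ≠ ⊤)
    (h : ∀ δ : ℝ≥0∞, 0 < δ → ∃ f : X → ℝ≥0∞, Measurable f ∧ (∀ ν ∈ E, 1 ≤ ∫⁻ x, f x ∂ν) ∧
      ∫⁻ x, f x ^ p ∂μ ≤ M ∧ μ (support f) < δ) :
    pModulus μ p E = 0 := by
  set K : ℝ≥0∞ := 2 ^ (p - 1) * (1 + M)
  have hK_ne_top : K ≠ ⊤ := by finiteness
  have le_average : ∀ N : ℕ, N ≠ 0 → pModulus μ p E ≤ (N : ℝ≥0∞) ^ (1 - p) * K := by
    intro N hN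
    have hN₀ : (N : ℝ≥0∞) ≠ 0 := Nat.cast_ne_zero.2 hN
    have hN_top : (N : ℝ≥0∞) ≠ ⊤ := ENNReal.natCast_ne_top N
    obtain ⟨g, hg, hgE, hgp⟩ := exists_natCast_le_lintegral hp.le hM h N
    have hadm : ∀ ν ∈ E, 1 ≤ ∫⁻ x, (N : ℝ≥0∞)⁻¹ * g x ∂ν := fun ν hν ↦ by
      rw [lintegral_const_mul _ hg, ← ENNReal.inv_mul_cancel hN₀ hN_top]
      gcongr
      exact hgE ν hν
    calc pModulus μ p E
        ≤ ∫⁻ x, ((N : ℝ≥0∞)⁻¹ * g x) ^ p ∂μ := pModulus_le_lintegral (hg.const_mul _) hadm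
      _ = (N : ℝ≥0∞) ^ (-p) * ∫⁻ x, g x ^ p ∂μ := by
          simp only [ENNReal.mul_rpow_of_nonneg _ _ (zero_le_one.trans hp.le), ENNReal.inv_rpow,
            ← ENNReal.rpow_neg]
          exact lintegral_const_mul _ (hg.pow_const p)
      _ ≤ (N : ℝ≥0∞) ^ (-p) * (N * K) := by gcongr
      _ = (N : ℝ≥0∞) ^ (1 - p) * K := by
          rw [← mul_assoc, sub_eq_neg_add, ENNReal.rpow_add _ _ hN₀ hN_top, ENNReal.rpow_one]
  have tendsto_zero : Tendsto (fun N : ℕ ↦ (N : ℝ≥0∞) ^ (1 - p) * K) atTop (𝓝 0) := by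
    have hpow : Tendsto (fun N : ℕ ↦ (N : ℝ≥0∞) ^ (1 - p)) atTop (𝓝 0) := by
      rw [← ENNReal.top_rpow_of_neg (sub_neg.2 hp)]
      exact (ENNReal.continuous_rpow_const.tendsto ⊤).comp ENNReal.tendsto_nat_nhds_top
    simpa only [zero_mul] using ENNReal.Tendsto.mul_const hpow (Or.inr hK_ne_top)
  exact nonpos_iff_eq_zero.1
    (ge_of_tendsto tendsto_zero ((eventually_ne_atTop 0).mono le_average))

end Modulus

section Curves

variable {X : Type*} [PseudoMetricSpace X] {L : ℝ} {c : ℝ → X}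

lemma IsArcLengthParam.nontrivial_image (hc : IsArcLengthParam L c) (hL : 0 < L) :
    (c '' Icc 0 L).Nontrivial := by
  by_contra hconst
  have hlength := hc.2 0 L le_rfl hL.le le_rfl
  rw [eVariationOn.constant_on (not_nontrivial_iff.1 hconst), sub_zero] at hlength
  exact (ENNReal.ofReal_pos.2 hL).ne hlength

lemma ofReal_le_volume_inter_preimage_closedBall {s : Set ℝ} (hs : s.OrdConnected)
    (hc : LipschitzOnWith 1 c s) {t₀ t₁ : ℝ} (h₀ : t₀ ∈ s) (h₁ : t₁ ∈ s) {x : X} {r : ℝ}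
    (hin : c t₀ ∈ closedBall x r) (hout : c t₁ ∉ closedBall x (2 * r)) :
    ENNReal.ofReal r ≤ volume (s ∩ c ⁻¹' closedBall x (2 * r)) := by
  have dist_le : ∀ t ∈ s, dist (c t) x ≤ |t - t₀| + r := fun t ht ↦
    calc dist (c t) x ≤ dist (c t) (c t₀) + dist (c t₀) x := dist_triangle _ _ _
      _ ≤ |t - t₀| + r := by
        gcongr
        · simpa [Real.dist_eq] using hc.dist_le_mul t ht t₀ h₀
        · exact hin
  have mem : ∀ t ∈ s, |t - t₀| ≤ r → t ∈ s ∩ c ⁻¹' closedBall x (2 * r) := fun t ht htr ↦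
    ⟨ht, mem_closedBall.2 (by linarith [dist_le t ht])⟩
  have r_lt : r < |t₁ - t₀| := by
    by_contra! hle
    exact hout (mem t₁ h₁ hle).2
  rcases lt_abs.1 r_lt with hright | hleft
  · calc ENNReal.ofReal r = volume (Icc t₀ (t₀ + r)) := by rw [Real.volume_Icc, add_sub_cancel_left]
      _ ≤ _ := measure_mono fun t ht ↦
        mem t (hs.out h₀ h₁ ⟨ht.1, by linarith [ht.2]⟩) <| abs_le.2
          ⟨by linarith [ht.1, ht.2], by linarith [ht.2]⟩
  · calc ENNReal.ofReal r = volume (Icc (t₀ - r) t₀) := by rw [Real.volume_Icc, sub_sub_cancel]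
      _ ≤ _ := measure_mono fun t ht ↦
        mem t (hs.out h₁ h₀ ⟨by linarith [ht.1], ht.2⟩) <| abs_le.2
          ⟨by linarith [ht.1], by linarith [ht.1, ht.2]⟩

variable [MeasurableSpace X]

/-- The length measure of a curve `c : [0, L] → X` parametrized by arc length: integrating a density
against it is the line integral over `c`. -/
noncomputable def lengthMeasure (L : ℝ) (c : ℝ → X) : Measure X :=
  (volume.restrict (Icc 0 L)).map c

variable [BorelSpace X]

lemma lintegral_lengthMeasure (hc : ContinuousOn c (Icc 0 L)) {ρ : X → ℝ≥0∞} (hρ : Measurable ρ) :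
    ∫⁻ x, ρ x ∂lengthMeasure L c = ∫⁻ t in Icc 0 L, ρ (c t) :=
  lintegral_map' hρ.aemeasurable (hc.aemeasurable measurableSet_Icc)

lemma lengthMeasure_apply (hc : ContinuousOn c (Icc 0 L)) {s : Set X} (hs : MeasurableSet s) :
    lengthMeasure L c s = volume (Icc 0 L ∩ c ⁻¹' s) := by
  rw [lengthMeasure, Measure.map_apply_of_aemeasurable (hc.aemeasurable measurableSet_Icc) hs,
    Measure.restrict_apply' measurableSet_Icc, inter_comm]

/-- The length measures of the `1`-Lipschitz curves that meet `A` in a point at distance more than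
`η` from some other point of the curve. -/
def lengthMeasuresThrough (A : Set X) (η : ℝ) : Set (Measure X) :=
  {ν | ∃ (L : ℝ) (c : ℝ → X), LipschitzOnWith 1 c (Icc 0 L) ∧
    (∃ t₀ ∈ Icc 0 L, ∃ t₁ ∈ Icc 0 L, c t₀ ∈ A ∧ η < dist (c t₀) (c t₁)) ∧ ν = lengthMeasure L c}

end Curves

section HausdorffCover

lemma exists_cover_tsum_ediam_rpow_lt {X : Type*} [EMetricSpace X] [MeasurableSpace X]
    [BorelSpace X] {d : ℝ} {A : Set X} (hA : μH[d] A ≠ ⊤) {δ ε : ℝ≥0∞} (hδ : 0 < δ) (hε : ε ≠ 0) :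
    ∃ (ι : Type) (_ : Countable ι) (t : ι → Set X), (∀ i, (t i).Nonempty) ∧ A ⊆ ⋃ i, t i ∧
      (∀ i, ediam (t i) ≤ δ) ∧ ∑' i, ediam (t i) ^ d < μH[d] A + ε := by
  have hlt : (⨅ (t : ℕ → Set X) (_ : A ⊆ ⋃ n, t n) (_ : ∀ n, ediam (t n) ≤ δ),
      ∑' n, ⨆ _ : (t n).Nonempty, ediam (t n) ^ d) < μH[d] A + ε := by
    refine lt_of_le_of_lt ?_ (ENNReal.lt_add_right hA hε)
    rw [Measure.hausdorffMeasure_apply]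
    exact le_iSup₂_of_le δ hδ le_rfl
  simp only [iInf_lt_iff] at hlt
  obtain ⟨t, hcov, hdiam, hsum⟩ := hlt
  refine ⟨{n // (t n).Nonempty}, inferInstance, fun i ↦ t i, fun i ↦ i.2, fun a ha ↦ ?_,
    fun i ↦ hdiam i, ?_⟩
  · obtain ⟨n, hn⟩ := mem_iUnion.1 (hcov ha)
    exact mem_iUnion.2 ⟨⟨n, a, hn⟩, hn⟩
  · calc ∑' i : {n // (t n).Nonempty}, ediam (t i) ^ d
        = ∑' i : {n // (t n).Nonempty}, ⨆ _ : (t i).Nonempty, ediam (t i) ^ d :=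
          tsum_congr fun i ↦ by rw [iSup_pos i.2]
      _ ≤ ∑' n, ⨆ _ : (t n).Nonempty, ediam (t n) ^ d :=
          ENNReal.tsum_comp_le_tsum_of_injective Subtype.val_injective _
      _ < μH[d] A + ε := hsum

lemma exists_closedBall_cover_tsum_rpow_le {X : Type*} [MetricSpace X] [MeasurableSpace X]
    [BorelSpace X] {d : ℝ} {A : Set X} (hA : μH[d] A ≠ ⊤) {δ : ℝ≥0} (hδ : 0 < δ) {ε : ℝ≥0∞}
    (hε : ε ≠ 0) :
    ∃ (ι : Type) (_ : Countable ι) (x : ι → X) (r : ι → ℝ≥0), (∀ i, 0 < r i ∧ r i < δ) ∧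
      A ⊆ ⋃ i, closedBall (x i) (r i) ∧ ∑' i, (r i : ℝ≥0∞) ^ d ≤ μH[d] A + ε := by
  have hε₂ : ε / 2 ≠ 0 := (ENNReal.half_pos hε).ne'
  obtain ⟨ι, _, t, hne, hcov, hdiam, hsum⟩ :=
    exists_cover_tsum_ediam_rpow_lt hA (ENNReal.coe_pos.2 (half_pos hδ)) hε₂
  obtain ⟨ε', hε', hε'_sum⟩ := ENNReal.exists_pos_sum_of_countable' hε₂ ι
  have exists_radius : ∀ i, ∃ r : ℝ≥0, ediam (t i) < r ∧ r < δ ∧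
      (r : ℝ≥0∞) ^ d < ediam (t i) ^ d + ε' i := by
    intro i
    obtain ⟨e, he, heδ⟩ := ENNReal.le_coe_iff.1 (hdiam i)
    have hlt : (e : ℝ≥0∞) ^ d < ediam (t i) ^ d + ε' i := by
      rw [← he]
      exact ENNReal.lt_add_right (ENNReal.ne_top_of_tsum_ne_top hsum.ne_top i) (hε' i).ne'
    have hpow : ∀ᶠ r : ℝ≥0 in 𝓝 e, (r : ℝ≥0∞) ^ d < ediam (t i) ^ d + ε' i :=
      (ENNReal.continuous_rpow_const.comp ENNReal.continuous_coe).continuousAt.eventually_lt_const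
        hlt
    have hIoo : ∀ᶠ r in 𝓝[>] e, r ∈ Ioo e δ := Ioo_mem_nhdsGT (heδ.trans_lt (half_lt_self hδ))
    obtain ⟨r, hr, hr_pow⟩ := (hIoo.and (nhdsWithin_le_nhds hpow)).exists
    exact ⟨r, he ▸ ENNReal.coe_lt_coe.2 hr.1, hr.2, hr_pow⟩
  choose r hr hrδ hr_pow using exists_radius
  refine ⟨ι, inferInstance, fun i ↦ (hne i).some, r,
    fun i ↦ ⟨ENNReal.coe_pos.1 (zero_le.trans_lt (hr i)), hrδ i⟩,
    hcov.trans (iUnion_mono fun i a ha ↦ ?_), ?_⟩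
  · rw [mem_closedBall, ← coe_nndist, NNReal.coe_le_coe, ← ENNReal.coe_le_coe, ← edist_nndist]
    exact (edist_le_ediam_of_mem ha (hne i).some_mem).trans (hr i).le
  · calc ∑' i, (r i : ℝ≥0∞) ^ d
        ≤ ∑' i, (ediam (t i) ^ d + ε' i) := ENNReal.tsum_le_tsum fun i ↦ (hr_pow i).le
      _ ≤ μH[d] A + ε / 2 + ε / 2 := by
          rw [ENNReal.tsum_add]
          gcongr
      _ = μH[d] A + ε := by rw [add_assoc, ENNReal.add_halves]

end HausdorffCover

section BallDensity

variable {X : Type*} [PseudoMetricSpace X] {ι : Type*} {x : ι → X} {r : ι → ℝ≥0}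

/-- The density `supᵢ rᵢ⁻¹ 1_{B(xᵢ, 2 rᵢ)}`, which charges the curves leaving the balls
`B(xᵢ, 2 rᵢ)` from within `B(xᵢ, rᵢ)`. -/
noncomputable def ballDensity (x : ι → X) (r : ι → ℝ≥0) (y : X) : ℝ≥0∞ :=
  ⨆ i, (closedBall (x i) (2 * r i)).indicator (fun _ ↦ (r i : ℝ≥0∞)⁻¹) y

lemma support_ballDensity_subset (x : ι → X) (r : ι → ℝ≥0) :
    support (ballDensity x r) ⊆ ⋃ i, closedBall (x i) (2 * r i) := by
  intro y hy
  by_contra hy'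
  simp only [mem_iUnion, not_exists] at hy'
  exact hy (ENNReal.iSup_eq_zero.2 fun i ↦ indicator_of_notMem (hy' i) _)

variable [MeasurableSpace X] {μ : Measure X} {p Q : ℝ} {C : ℝ≥0∞}

lemma measure_closedBall_two_mul_le
    (hμ : ∀ (x : X) (r : ℝ≥0), 0 < r → μ (closedBall x r) ≤ C * (r : ℝ≥0∞) ^ Q)
    (x : X) {r : ℝ≥0} (hr : 0 < r) (p : ℝ) :
    μ (closedBall x (2 * r)) ≤ C * 2 ^ Q * ((r : ℝ≥0∞) ^ p * (r : ℝ≥0∞) ^ (Q - p)) := by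
  rw [← ENNReal.rpow_add _ _ (ENNReal.coe_ne_zero.2 hr.ne') ENNReal.coe_ne_top, add_sub_cancel,
    mul_assoc, ← ENNReal.mul_rpow_of_ne_top (by finiteness) (by finiteness)]
  simpa using hμ x (2 * r) (by positivity)

lemma measure_support_ballDensity_le [Countable ι] (hp : 0 ≤ p)
    (hμ : ∀ (x : X) (r : ℝ≥0), 0 < r → μ (closedBall x r) ≤ C * (r : ℝ≥0∞) ^ Q)
    (x : ι → X) {δ : ℝ≥0} (hr : ∀ i, 0 < r i) (hrδ : ∀ i, r i ≤ δ) :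
    μ (support (ballDensity x r)) ≤
      C * 2 ^ Q * ((δ : ℝ≥0∞) ^ p * ∑' i, (r i : ℝ≥0∞) ^ (Q - p)) :=
  calc μ (support (ballDensity x r))
      ≤ ∑' i, μ (closedBall (x i) (2 * r i)) :=
        (measure_mono (support_ballDensity_subset x r)).trans (measure_iUnion_le _)
    _ ≤ ∑' i, C * 2 ^ Q * ((δ : ℝ≥0∞) ^ p * (r i : ℝ≥0∞) ^ (Q - p)) := by
        refine ENNReal.tsum_le_tsum fun i ↦
          (measure_closedBall_two_mul_le hμ (x i) (hr i) p).trans ?_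
        gcongr
        exact hrδ i
    _ = C * 2 ^ Q * ((δ : ℝ≥0∞) ^ p * ∑' i, (r i : ℝ≥0∞) ^ (Q - p)) := by
        rw [ENNReal.tsum_mul_left, ENNReal.tsum_mul_left]

variable [BorelSpace X]

lemma measurable_ballDensity [Countable ι] (x : ι → X) (r : ι → ℝ≥0) :
    Measurable (ballDensity x r) :=
  .iSup fun _ ↦ measurable_const.indicator measurableSet_closedBall

lemma lintegral_ballDensity_rpow_le [Countable ι] (hp : 0 < p)
    (hμ : ∀ (x : X) (r : ℝ≥0), 0 < r → μ (closedBall x r) ≤ C * (r : ℝ≥0∞) ^ Q)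
    (x : ι → X) (hr : ∀ i, 0 < r i) :
    ∫⁻ y, ballDensity x r y ^ p ∂μ ≤ C * 2 ^ Q * ∑' i, (r i : ℝ≥0∞) ^ (Q - p) := by
  have on_ball : ∀ i, ∫⁻ y, (closedBall (x i) (2 * r i)).indicator (fun _ ↦ (r i : ℝ≥0∞)⁻¹) y ^ p ∂μ
      ≤ C * 2 ^ Q * (r i : ℝ≥0∞) ^ (Q - p) := by
    intro i
    have hri : (r i : ℝ≥0∞) ^ p ≠ 0 := by simp [(hr i).ne']
    have hri' : (r i : ℝ≥0∞) ^ p ≠ ⊤ := by finiteness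
    calc ∫⁻ y, (closedBall (x i) (2 * r i)).indicator (fun _ ↦ (r i : ℝ≥0∞)⁻¹) y ^ p ∂μ
        = ∫⁻ y, (closedBall (x i) (2 * r i)).indicator (fun _ ↦ ((r i : ℝ≥0∞) ^ p)⁻¹) y ∂μ :=
          lintegral_congr fun y ↦ by
            by_cases hy : y ∈ closedBall (x i) (2 * r i) <;> simp [hy, hp, ENNReal.inv_rpow]
      _ = ((r i : ℝ≥0∞) ^ p)⁻¹ * μ (closedBall (x i) (2 * r i)) :=
          lintegral_indicator_const measurableSet_closedBall _
      _ ≤ ((r i : ℝ≥0∞) ^ p)⁻¹ *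
            (C * 2 ^ Q * ((r i : ℝ≥0∞) ^ p * (r i : ℝ≥0∞) ^ (Q - p))) := by
          gcongr
          exact measure_closedBall_two_mul_le hμ (x i) (hr i) p
      _ = C * 2 ^ Q * (r i : ℝ≥0∞) ^ (Q - p) := by
          rw [mul_left_comm, ← mul_assoc _ _ (_ ^ (Q - p)), ENNReal.inv_mul_cancel hri hri',
            one_mul]
  calc ∫⁻ y, ballDensity x r y ^ p ∂μ
      ≤ ∑' i, ∫⁻ y, (closedBall (x i) (2 * r i)).indicator (fun _ ↦ (r i : ℝ≥0∞)⁻¹) y ^ p ∂μ :=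
        lintegral_iSup_rpow_le_tsum hp fun _ ↦ measurable_const.indicator measurableSet_closedBall
    _ ≤ ∑' i, C * 2 ^ Q * (r i : ℝ≥0∞) ^ (Q - p) := ENNReal.tsum_le_tsum on_ball
    _ = C * 2 ^ Q * ∑' i, (r i : ℝ≥0∞) ^ (Q - p) := ENNReal.tsum_mul_left

lemma one_le_lintegral_ballDensity {A : Set X} {η : ℝ} (hr : ∀ i, 0 < r i)
    (hrη : ∀ i, 3 * (r i : ℝ) ≤ η) (hcov : A ⊆ ⋃ i, closedBall (x i) (r i)) {ν : Measure X}
    (hν : ν ∈ lengthMeasuresThrough A η) : 1 ≤ ∫⁻ y, ballDensity x r y ∂ν := by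
  obtain ⟨L, c, hc, ⟨t₀, h₀, t₁, h₁, hA, hη⟩, rfl⟩ := hν
  obtain ⟨i, hi⟩ := mem_iUnion.1 (hcov hA)
  have hout : c t₁ ∉ closedBall (x i) (2 * r i) := fun hmem ↦ by
    linarith [hrη i, dist_triangle_right (c t₀) (c t₁) (x i), mem_closedBall.1 hi,
      mem_closedBall.1 hmem]
  have length_le : (r i : ℝ≥0∞) ≤ lengthMeasure L c (closedBall (x i) (2 * r i)) := by
    rw [lengthMeasure_apply hc.continuousOn measurableSet_closedBall, ← ENNReal.ofReal_coe_nnreal]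
    exact ofReal_le_volume_inter_preimage_closedBall ordConnected_Icc hc h₀ h₁ hi hout
  calc (1 : ℝ≥0∞) = (r i : ℝ≥0∞)⁻¹ * r i :=
        (ENNReal.inv_mul_cancel (ENNReal.coe_ne_zero.2 (hr i).ne') ENNReal.coe_ne_top).symm
    _ ≤ (r i : ℝ≥0∞)⁻¹ * lengthMeasure L c (closedBall (x i) (2 * r i)) := by gcongr
    _ = ∫⁻ y, (closedBall (x i) (2 * r i)).indicator (fun _ ↦ (r i : ℝ≥0∞)⁻¹) y
          ∂lengthMeasure L c := (lintegral_indicator_const measurableSet_closedBall _).symm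
    _ ≤ ∫⁻ y, ballDensity x r y ∂lengthMeasure L c :=
        lintegral_mono fun y ↦ le_iSup
          (fun i ↦ (closedBall (x i) (2 * r i)).indicator (fun _ ↦ (r i : ℝ≥0∞)⁻¹) y) i

end BallDensity

theorem pModulus_lengthMeasuresThrough_eq_zero {X : Type*} [MetricSpace X] [MeasurableSpace X]
    [BorelSpace X] {μ : Measure X} {p Q : ℝ} {C : ℝ≥0∞} (hp : 1 < p) (hC : C ≠ ⊤)
    (hμ : ∀ (x : X) (r : ℝ≥0), 0 < r → μ (closedBall x r) ≤ C * (r : ℝ≥0∞) ^ Q)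
    {A : Set X} (hA : μH[Q - p] A ≠ ⊤) {η : ℝ} (hη : 0 < η) :
    pModulus μ p (lengthMeasuresThrough A η) = 0 := by
  have hp₀ : 0 < p := zero_lt_one.trans hp
  set H := μH[Q - p] A + 1
  have hCQ : C * 2 ^ Q ≠ ⊤ := by finiteness
  have hH_top : H ≠ ⊤ := by finiteness
  refine pModulus_eq_zero_of_measure_support_lt hp (M := C * 2 ^ Q * H)
    (ENNReal.mul_ne_top hCQ hH_top) fun θ hθ ↦ ?_
  have small_measure : ∀ᶠ δ : ℝ≥0 in 𝓝 0, C * 2 ^ Q * ((δ : ℝ≥0∞) ^ p * H) < θ := by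
    have hcont : Continuous fun δ : ℝ≥0 ↦ C * 2 ^ Q * ((δ : ℝ≥0∞) ^ p * H) :=
      (ENNReal.continuous_const_mul hCQ).comp ((ENNReal.continuous_mul_const hH_top).comp
        (ENNReal.continuous_rpow_const.comp ENNReal.continuous_coe))
    exact hcont.continuousAt.eventually_lt_const (by simpa [hp₀] using hθ)
  have small_radius : ∀ᶠ δ : ℝ≥0 in 𝓝 0, 3 * (δ : ℝ) < η :=
    (continuous_const.mul NNReal.continuous_coe).continuousAt.eventually_lt_const
      (by simpa using hη)
  obtain ⟨δ, ⟨hδθ, hδη⟩, hδ⟩ :=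
    (((small_measure.and small_radius).filter_mono nhdsWithin_le_nhds).and
      (self_mem_nhdsWithin : Ioi (0 : ℝ≥0) ∈ 𝓝[>] 0)).exists
  obtain ⟨ι, _, x, r, hr, hcov, hsum⟩ :=
    exists_closedBall_cover_tsum_rpow_le hA (mem_Ioi.1 hδ) one_ne_zero
  refine ⟨ballDensity x r, measurable_ballDensity x r, fun ν hν ↦ ?_, ?_, ?_⟩
  · refine one_le_lintegral_ballDensity (fun i ↦ (hr i).1) (fun i ↦ ?_) hcov hν
    linarith [NNReal.coe_lt_coe.2 (hr i).2]
  · grw [lintegral_ballDensity_rpow_le hp₀ hμ x fun i ↦ (hr i).1, hsum]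
  · grw [measure_support_ballDensity_le hp₀.le hμ x (fun i ↦ (hr i).1) fun i ↦ (hr i).2.le, hsum]
    exact hδθ

theorem stmt5_general {X : Type*} [MetricSpace X] [MeasurableSpace X] [BorelSpace X]
    (μ : Measure X) (p Q C : ℝ) (hp1 : 1 < p)
    (hgrowth : ∀ (x : X) (r : ℝ), 0 < r →
      μ (closedBall x r) ≤ ENNReal.ofReal (C * r ^ Q))
    (A : Set X) (hH : μH[Q - p] A < ⊤) (ε : ℝ≥0∞) (hε : 0 < ε) :
    ∃ ρ : X → ℝ≥0∞, Measurable ρ ∧ (∫⁻ x, ρ x ^ p ∂μ) ≤ ε ∧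
      ∀ (L : ℝ) (c : ℝ → X), LipschitzOnWith 1 c (Icc 0 L) → (c '' Icc 0 L).Nontrivial →
        (∃ t ∈ Icc 0 L, c t ∈ A) → 1 ≤ ∫⁻ t in Icc 0 L, ρ (c t) := by
  have hμ : ∀ (x : X) (r : ℝ≥0), 0 < r →
      μ (closedBall x r) ≤ ENNReal.ofReal C * (r : ℝ≥0∞) ^ Q := fun x r hr ↦ by
    rw [← ENNReal.ofReal_coe_nnreal (p := r), ENNReal.ofReal_rpow_of_pos (NNReal.coe_pos.2 hr),
      ← ENNReal.ofReal_mul' (by positivity)]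
    exact hgrowth x r (NNReal.coe_pos.2 hr)
  have modulus_eq_zero :
      pModulus μ p (⋃ n : ℕ, lengthMeasuresThrough A (1 / (n + 1))) = 0 := by
    refine nonpos_iff_eq_zero.1 ((pModulus_iUnion_le (zero_lt_one.trans hp1) _).trans_eq ?_)
    exact ENNReal.tsum_eq_zero.2 fun n ↦
      pModulus_lengthMeasuresThrough_eq_zero hp1 ENNReal.ofReal_ne_top hμ hH.ne (by positivity)
  obtain ⟨ρ, hρ, hadm, hlt⟩ := exists_lintegral_rpow_lt_of_pModulus_lt (modulus_eq_zero ▸ hε)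
  refine ⟨ρ, hρ, hlt.le, fun L c hc hnontrivial ⟨t₀, h₀, hA⟩ ↦ ?_⟩
  obtain ⟨_, ⟨t₁, h₁, rfl⟩, hne⟩ := hnontrivial.exists_ne (c t₀)
  obtain ⟨n, hn⟩ := exists_nat_one_div_lt (dist_pos.2 hne.symm)
  rw [← lintegral_lengthMeasure hc.continuousOn hρ]
  exact hadm _ (mem_iUnion.2 ⟨n, L, c, hc, ⟨t₀, h₀, t₁, h₁, hA, hn⟩, rfl⟩)

/-- Let `(X,d)` be a metric space, `μ` a Borel measure with
`μ(B(x,r)) ≤ C·r^Q` (closed balls), `1 < p ≤ Q`, and `A ⊆ X` compact with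
`H^{Q-p}(A) < ∞`. Then the family of arc-length parametrized curves meeting `A`
has zero `p`-modulus: for every `ε > 0` there is a Borel `ρ : X → [0,∞]` with
`∫ ρ^p dμ ≤ ε` and `∫_0^L ρ(c(t)) dt ≥ 1` for every arc-length parametrized curve
`c : [0,L] → X` whose image meets `A`. -/
theorem stmt5 {X : Type*} [MetricSpace X] [MeasurableSpace X] [BorelSpace X]
    (μ : Measure X) (p Q C : ℝ) (hp1 : 1 < p) (hpQ : p ≤ Q) (hC : 0 < C)
    (hgrowth : ∀ (x : X) (r : ℝ), 0 < r →
      μ (closedBall x r) ≤ ENNReal.ofReal (C * r ^ Q))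
    (A : Set X) (hAc : IsCompact A) (hH : μH[Q - p] A < ⊤) :
    ∀ ε : ℝ≥0∞, 0 < ε → ∃ ρ : X → ℝ≥0∞, Measurable ρ ∧
      (∫⁻ x, ρ x ^ p ∂μ) ≤ ε ∧
      ∀ L : ℝ, 0 < L → ∀ c : ℝ → X, IsArcLengthParam L c →
        (∃ t ∈ Icc 0 L, c t ∈ A) →
        1 ≤ ∫⁻ t in Icc 0 L, ρ (c t) ∂volume := by
  intro ε hε
  obtain ⟨ρ, hρ, hρε, h⟩ := stmt5_general μ p Q C hp1 hgrowth A hH ε hε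
  exact ⟨ρ, hρ, hρε, fun L hL c hc hA ↦ h L c hc.1 (hc.nontrivial_image hL) hA⟩
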